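/- arXiv:2504.12274 — 6 statements merged into one kernel-verified Lean document; each statement's English description precedes it below -/
import Mathlib

section
/- For every finite simple graph G on vertex set Fin n and every field F, the minrank of G over F is at most the clique cover number of G, i.e., minrank_F(G) ≤ χ(Gᶜ), where Gᶜ denotes the complement of G. -/
/-- The chromatic number of a graph, as a natural number: the least `m` such that the graph
admits a proper coloring with `m` colors. -/
noncomputable def chromNum {W : Type*} (G : SimpleGraph W) : ℕ :=
  sInf {m | G.Colorable m}

/-- `A` represents `G` over `F` if all diagonal entries of `A` are nonzero and `A i j = 0`
for all distinct non-adjacent vertices `i`, `j`. The minrank of `G` over `F` is the minimum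
rank of a matrix representing `G` over `F`. -/
noncomputable def minrank (F : Type*) [Field F] {V : Type*} [Fintype V] [DecidableEq V]
    (G : SimpleGraph V) : ℕ :=
  sInf {r | ∃ A : Matrix V V F, (∀ i, A i i ≠ 0) ∧
    (∀ i j, i ≠ j → ¬ G.Adj i j → A i j = 0) ∧ A.rank = r}

/-- The minrank of `G` over a field `F` is at most the clique cover number of `G`
(the chromatic number of the complement of `G`). -/
theorem minrank_le_cliqueCover (n : ℕ) (F : Type*) [Field F] (G : SimpleGraph (Fin n)) :
    minrank F G ≤ chromNum Gᶜ := by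
  have hne : {m | Gᶜ.Colorable m}.Nonempty := ⟨_, Gᶜ.colorable_of_fintype⟩
  obtain ⟨c⟩ : Gᶜ.Colorable (chromNum Gᶜ) := Nat.sInf_mem hne
  generalize chromNum Gᶜ = k at c
  let B : Matrix (Fin n) (Fin k) F := Matrix.of fun i a => if c i = a then 1 else 0
  have hB : ∀ i j, (B * B.transpose) i j = if c i = c j then 1 else 0 := by
    intro i j
    simp [B, Matrix.mul_apply, eq_comm]
  have hmem : minrank F G ≤ (B * B.transpose).rank := by
    refine Nat.sInf_le ⟨B * B.transpose, ?_, ?_, rfl⟩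
    · intro i
      simp [hB]
    · intro i j hij hadj
      rw [hB, if_neg]
      exact c.valid ((SimpleGraph.compl_adj G i j).2 ⟨hij, hadj⟩)
  exact hmem.trans ((Matrix.rank_mul_le_left _ _).trans B.rank_le_width)
end

section
/- Let G be a finite simple graph on vertex set Fin n, let V = V₁ ∪ V₂ be a partition of the vertex set into two disjoint sets, and let F be a field. Then minrank_F(G) ≤ minrank_F(G[V₁]) + minrank_F(G[V₂]), where G[Vᵢ] denotes the subgraph of G induced by Vᵢ. -/
theorem minrank_aux_extend {n : ℕ} {F : Type*} [Field F] (S : Set (Fin n)) [Fintype S]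
    [DecidableEq S] (A : Matrix S S F) :
    ∃ B : Matrix (Fin n) (Fin n) F, (∀ i j : S, B i j = A i j) ∧
      (∀ i j, (i ∉ S ∨ j ∉ S) → B i j = 0) ∧ B.rank ≤ A.rank := by
  classical
  let P : Matrix (Fin n) S F := fun i v => if i = v then 1 else 0
  refine ⟨P * A * P.transpose, ?_, ?_, ?_⟩
  · intro i j
    have hP : ∀ i v : S, P i v = if i = v then 1 else 0 := by
      intro i v
      simp only [P, Subtype.coe_inj]
    simp [Matrix.mul_apply, Matrix.transpose_apply, hP]
  · intro i j h
    have hP : ∀ i, i ∉ S → ∀ v : S, P i v = 0 := by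
      intro i hi v
      have : i ≠ v := fun h => hi (h ▸ v.2)
      simp [P, this]
    rcases h with h | h
    · simp [Matrix.mul_apply, hP i h]
    · simp [Matrix.mul_apply, hP j h]
  · exact (Matrix.rank_mul_le_left _ _).trans (Matrix.rank_mul_le_right _ _)

theorem minrank_aux_rank_add {n : ℕ} {F : Type*} [Field F] (A B : Matrix (Fin n) (Fin n) F) :
    (A + B).rank ≤ A.rank + B.rank := by
  unfold Matrix.rank
  refine le_trans (Submodule.finrank_mono ?_) (Submodule.finrank_add_le_finrank_add_finrank _ _)
  rw [Matrix.mulVecLin_add]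
  exact LinearMap.range_add_le _ _

theorem minrank_aux_spec (F : Type*) [Field F] {V : Type*} [Fintype V] [DecidableEq V]
    (G : SimpleGraph V) : ∃ A : Matrix V V F, (∀ i, A i i ≠ 0) ∧
    (∀ i j, i ≠ j → ¬ G.Adj i j → A i j = 0) ∧ A.rank = minrank F G := by
  have := Nat.sInf_mem (s := {r | ∃ A : Matrix V V F, (∀ i, A i i ≠ 0) ∧
    (∀ i j, i ≠ j → ¬ G.Adj i j → A i j = 0) ∧ A.rank = r})
    ⟨_, 1, by simp, fun i j h _ => Matrix.one_apply_ne h, rfl⟩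
  exact this

/-- For a partition of the vertex set into `V₁` and `V₂`, the minrank of `G` over `F` is
at most the sum of the minranks of the induced subgraphs `G[V₁]` and `G[V₂]`. -/
theorem minrank_union_le (n : ℕ) (F : Type*) [Field F] (G : SimpleGraph (Fin n))
    (V₁ V₂ : Finset (Fin n)) (hunion : V₁ ∪ V₂ = Finset.univ) (hdisj : Disjoint V₁ V₂) :
    minrank F G ≤
      minrank F (G.induce (V₁ : Set (Fin n))) + minrank F (G.induce (V₂ : Set (Fin n))) := by
  obtain ⟨A₁, hd₁, ho₁, hr₁⟩ := minrank_aux_spec F (G.induce (V₁ : Set (Fin n)))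
  obtain ⟨A₂, hd₂, ho₂, hr₂⟩ := minrank_aux_spec F (G.induce (V₂ : Set (Fin n)))
  obtain ⟨B₁, he₁, hz₁, hb₁⟩ := minrank_aux_extend _ A₁
  obtain ⟨B₂, he₂, hz₂, hb₂⟩ := minrank_aux_extend _ A₂
  rw [← hr₁, ← hr₂]
  refine le_trans (Nat.sInf_le ⟨B₁ + B₂, ?_, ?_, rfl⟩)
    ((minrank_aux_rank_add B₁ B₂).trans (add_le_add hb₁ hb₂))
  · intro i
    have hi : i ∈ V₁ ∪ V₂ := hunion ▸ Finset.mem_univ i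
    rcases Finset.mem_union.1 hi with h | h
    · have h' : i ∉ V₂ := Finset.disjoint_left.1 hdisj h
      rw [Matrix.add_apply, hz₂ i i (Or.inl (by simpa using h')), add_zero]
      have := he₁ ⟨i, by simpa using h⟩ ⟨i, by simpa using h⟩
      exact this ▸ hd₁ _
    · have h' : i ∉ V₁ := Finset.disjoint_right.1 hdisj h
      rw [Matrix.add_apply, hz₁ i i (Or.inl (by simpa using h')), zero_add]
      have := he₂ ⟨i, by simpa using h⟩ ⟨i, by simpa using h⟩
      exact this ▸ hd₂ _
  · intro i j hij hadj
    have h1 : B₁ i j = 0 := by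
      by_cases h : i ∈ (V₁ : Set (Fin n)) ∧ j ∈ (V₁ : Set (Fin n))
      · exact (he₁ ⟨i, h.1⟩ ⟨j, h.2⟩).trans (ho₁ _ _ (by simpa using hij) (by simpa using hadj))
      · exact hz₁ i j (not_and_or.1 h)
    have h2 : B₂ i j = 0 := by
      by_cases h : i ∈ (V₂ : Set (Fin n)) ∧ j ∈ (V₂ : Set (Fin n))
      · exact (he₂ ⟨i, h.1⟩ ⟨j, h.2⟩).trans (ho₂ _ _ (by simpa using hij) (by simpa using hadj))
      · exact hz₂ i j (not_and_or.1 h)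
    rw [Matrix.add_apply, h1, h2, add_zero]
end

section
/- Let k ≥ 1 be an integer and let G be a finite simple graph with at least 3k − 2 vertices and with no isolated vertices. Then G has a matching of size k, or G admits a crown decomposition. -/
/-- A crown decomposition of `G`: a partition of the vertex set into a nonempty independent
set `C` (crown), a nonempty set `H` (head) separating `C` from `R` (royal body), together
with a matching of `H` into `C`. -/
def IsCrownDecomposition {V : Type*} [Fintype V] [DecidableEq V] (G : SimpleGraph V)
    (C H R : Finset V) : Prop :=
  C.Nonempty ∧ H.Nonempty ∧ C ∪ H ∪ R = Finset.univ ∧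
  Disjoint C H ∧ Disjoint C R ∧ Disjoint H R ∧
  (∀ u ∈ C, ∀ v ∈ C, ¬ G.Adj u v) ∧
  (∀ u ∈ C, ∀ v ∈ R, ¬ G.Adj u v) ∧
  ∃ f : H → C, Function.Injective f ∧ ∀ h : H, G.Adj ↑h ↑(f h)

/-- A set of pairs representing a matching. -/
def PairMatching {V : Type*} (G : SimpleGraph V) (S : Finset (V × V)) : Prop :=
  (∀ p ∈ S, G.Adj p.1 p.2) ∧
  ∀ p ∈ S, ∀ q ∈ S, p ≠ q → p.1 ≠ q.1 ∧ p.1 ≠ q.2 ∧ p.2 ≠ q.1 ∧ p.2 ≠ q.2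

theorem PairMatching.toSubgraph {V : Type*} {G : SimpleGraph V} {S : Finset (V × V)}
    (hS : PairMatching G S) :
    ∃ M : G.Subgraph, M.IsMatching ∧ M.edgeSet.ncard = S.card := by
  obtain ⟨h1, h2⟩ := hS
  let M : G.Subgraph :=
    { verts := {v | ∃ w, (v, w) ∈ S ∨ (w, v) ∈ S}
      Adj := fun a b => (a, b) ∈ S ∨ (b, a) ∈ S
      adj_sub := by
        rintro a b (h | h)
        · exact h1 _ h
        · exact (h1 _ h).symm
      edge_vert := by
        intro a b h
        exact ⟨b, h⟩
      symm := ⟨fun a b h => h.symm⟩ }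
  refine ⟨M, ?_, ?_⟩
  · rintro v ⟨w, hw⟩
    refine ⟨w, hw, ?_⟩
    intro y hy
    change (v, y) ∈ S ∨ (y, v) ∈ S at hy
    by_contra hne
    rcases hw with hw | hw <;> rcases hy with hy | hy
    · exact (h2 _ hw _ hy (by simpa using fun h => hne h.symm)).1 rfl
    · have := h1 _ hw
      by_cases e : (v, w) = (y, v)
      · simp only [Prod.mk.injEq] at e
        exact hne (e.1.symm.trans e.2.symm)
      · exact (h2 _ hw _ hy e).2.1 rfl
    · by_cases e : (w, v) = (v, y)
      · simp only [Prod.mk.injEq] at e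
        exact hne (e.2.symm.trans e.1.symm)
      · exact (h2 _ hw _ hy e).2.2.1 rfl
    · exact (h2 _ hw _ hy (by simpa using fun h => hne h.symm)).2.2.2 rfl
  · have e : M.edgeSet = Set.image (fun p : V × V => s(p.1, p.2)) (S : Set (V × V)) := by
      ext x
      induction x using Sym2.ind with
      | _ a b =>
        simp only [SimpleGraph.Subgraph.mem_edgeSet, Set.mem_image, Finset.mem_coe]
        constructor
        · rintro (h | h)
          · exact ⟨_, h, rfl⟩
          · exact ⟨_, h, Sym2.eq_swap⟩
        · rintro ⟨⟨c, d⟩, h, e⟩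
          rw [Sym2.eq_iff] at e
          rcases e with ⟨rfl, rfl⟩ | ⟨rfl, rfl⟩
          · exact Or.inl h
          · exact Or.inr h
    rw [e, Set.ncard_image_of_injOn, Set.ncard_coe_finset]
    rintro p hp q hq e
    by_contra hne
    have := h2 p hp q hq hne
    simp only [Sym2.eq_iff] at e
    tauto

open Classical in
theorem crown_of_indep {V : Type*} [Fintype V] (G : SimpleGraph V)
    (hiso : ∀ v : V, ∃ w, G.Adj v w) (I : Finset V) (hne : I.Nonempty)
    (hind : ∀ u ∈ I, ∀ v ∈ I, ¬ G.Adj u v)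
    (hc : (Finset.univ.filter (fun w => ∃ v ∈ I, G.Adj v w)).card ≤ I.card) :
    ∃ (J H : Finset V), J.Nonempty ∧ H.Nonempty ∧ J ⊆ I ∧
      (∀ w, w ∈ H ↔ ∃ v ∈ J, G.Adj v w) ∧
      ∃ f : H → J, Function.Injective f ∧ ∀ h : H, G.Adj ↑h ↑(f h) := by
  let N : Finset V → Finset V := fun J => Finset.univ.filter (fun w => ∃ v ∈ J, G.Adj v w)
  have hN : ∀ J w, w ∈ N J ↔ ∃ v ∈ J, G.Adj v w := by intro J w; simp [N]
  obtain ⟨J, hJ, hmin⟩ := Finset.exists_min_image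
    (I.powerset.filter (fun J => J.Nonempty ∧ (N J).card ≤ J.card)) Finset.card
    ⟨I, by simp only [Finset.mem_filter, Finset.mem_powerset]; exact ⟨subset_rfl, hne, hc⟩⟩
  simp only [Finset.mem_filter, Finset.mem_powerset] at hJ hmin
  obtain ⟨hJI, hJne, hJc⟩ := hJ
  refine ⟨J, N J, hJne, ?_, hJI, hN J, ?_⟩
  · obtain ⟨v, hv⟩ := hJne
    obtain ⟨w, hw⟩ := hiso v
    exact ⟨w, (hN _ _).2 ⟨v, hv, hw⟩⟩
  · let t : N J → Finset V := fun h => J.filter (fun v => G.Adj h v)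
    have hall := (Finset.all_card_le_biUnion_card_iff_exists_injective t).1 ?_
    · obtain ⟨f, hf, hft⟩ := hall
      refine ⟨fun h => ⟨f h, (Finset.mem_filter.1 (hft h)).1⟩, ?_, ?_⟩
      · intro a b hab
        exact hf (by simpa using hab)
      · intro h
        exact (Finset.mem_filter.1 (hft h)).2
    · intro X
      by_contra hlt
      push Not at hlt
      set B := X.biUnion t with hB
      have hBJ : B ⊆ J := by
        intro v hv
        obtain ⟨x, hx, hv⟩ := Finset.mem_biUnion.1 hv
        exact (Finset.mem_filter.1 hv).1
      let Y : Finset V := X.image Subtype.val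
      have hY : Y.card = X.card := Finset.card_image_of_injective _ Subtype.val_injective
      have hYJ : Y ⊆ N J := by
        intro v hv
        obtain ⟨x, hx, rfl⟩ := Finset.mem_image.1 hv
        exact x.2
      have hsub : N (J \ B) ⊆ N J \ Y := by
        intro w hw
        obtain ⟨v, hv, hvw⟩ := (hN _ _).1 hw
        rw [Finset.mem_sdiff] at hv ⊢
        refine ⟨(hN _ _).2 ⟨v, hv.1, hvw⟩, ?_⟩
        intro hwX
        obtain ⟨x, hx, rfl⟩ := Finset.mem_image.1 hwX
        exact hv.2 (Finset.mem_biUnion.2 ⟨x, hx, Finset.mem_filter.2 ⟨hv.1, hvw.symm⟩⟩)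
      have c1 := Finset.card_le_card hsub
      have c2 := Finset.card_sdiff_add_card_eq_card hYJ
      have c3 := Finset.card_sdiff_add_card_eq_card hBJ
      have hXne : X.Nonempty := Finset.card_pos.1 (by omega)
      have hBne : 0 < B.card := by
        obtain ⟨x, hx⟩ := hXne
        obtain ⟨v, hv, hvw⟩ := (hN _ _).1 x.2
        exact Finset.card_pos.2 ⟨v, Finset.mem_biUnion.2 ⟨x, hx,
          Finset.mem_filter.2 ⟨hv, hvw.symm⟩⟩⟩
      have := hmin (J \ B) ⟨Finset.sdiff_subset.trans hJI, Finset.card_pos.1 (by omega), by omega⟩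
      omega

open Classical in
theorem exists_indep {V : Type*} [Fintype V] (G : SimpleGraph V)
    (S : Finset (V × V)) (hS : PairMatching G S)
    (hmax : ∀ T, PairMatching G T → T.card ≤ S.card)
    (hcard : 3 * S.card + 1 ≤ Fintype.card V) :
    ∃ I : Finset V, I.Nonempty ∧ (∀ u ∈ I, ∀ v ∈ I, ¬ G.Adj u v) ∧
      (Finset.univ.filter (fun w => ∃ v ∈ I, G.Adj v w)).card ≤ I.card := by
  obtain ⟨h1, h2⟩ := hS
  let U : Finset V := Finset.univ.filter (fun v => ∀ p ∈ S, p.1 ≠ v ∧ p.2 ≠ v)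
  have hU : ∀ v, v ∈ U ↔ ∀ p ∈ S, p.1 ≠ v ∧ p.2 ≠ v := by intro v; simp [U]
  have hUc : S.card + 1 ≤ U.card := by
    have hsub : (Finset.univ : Finset V) ⊆ U ∪ (S.image Prod.fst ∪ S.image Prod.snd) := by
      intro v _
      by_cases hv : v ∈ U
      · exact Finset.mem_union_left _ hv
      · rw [hU] at hv
        push Not at hv
        obtain ⟨p, hp, hpv⟩ := hv
        apply Finset.mem_union_right
        rw [Finset.mem_union, Finset.mem_image, Finset.mem_image]
        by_cases e : p.1 = v
        · exact Or.inl ⟨p, hp, e⟩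
        · exact Or.inr ⟨p, hp, hpv e⟩
    have c1 := Finset.card_le_card hsub
    have c2 := Finset.card_union_le U (S.image Prod.fst ∪ S.image Prod.snd)
    have c3 := Finset.card_union_le (S.image Prod.fst) (S.image Prod.snd)
    have c4 := Finset.card_image_le (s := S) (f := Prod.fst)
    have c5 := Finset.card_image_le (s := S) (f := Prod.snd)
    rw [Finset.card_univ] at c1
    omega
  have hUind : ∀ u ∈ U, ∀ v ∈ U, ¬ G.Adj u v := by
    intro u hu v hv huv
    rw [hU] at hu hv
    have hn : (u, v) ∉ S := fun h => (hu _ h).1 rfl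
    have := hmax (insert (u, v) S) ⟨by
      intro p hp
      rcases Finset.mem_insert.1 hp with rfl | hp
      · exact huv
      · exact h1 p hp, by
      intro p hp q hq hpq
      rcases Finset.mem_insert.1 hp with rfl | hp <;> rcases Finset.mem_insert.1 hq with rfl | hq
      · exact absurd rfl hpq
      · exact ⟨(hu q hq).1.symm, (hu q hq).2.symm, (hv q hq).1.symm, (hv q hq).2.symm⟩
      · exact ⟨(hu p hp).1, (hv p hp).1, (hu p hp).2, (hv p hp).2⟩
      · exact h2 p hp q hq hpq⟩
    rw [Finset.card_insert_of_notMem hn] at this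
    omega
  have haug : ∀ p ∈ S, ∀ x ∈ U, ∀ y ∈ U, G.Adj p.1 x → G.Adj p.2 y → x = y := by
    intro p hp x hx y hy hpx hpy
    by_contra hxy
    rw [hU] at hx hy
    have hp12 := (h1 p hp).ne
    have n1 : (p.2, y) ∉ S.erase p := fun h => (hy _ (Finset.mem_of_mem_erase h)).2 rfl
    have n2 : (p.1, x) ∉ insert (p.2, y) (S.erase p) := by
      intro h
      rcases Finset.mem_insert.1 h with h | h
      · exact hp12 (Prod.ext_iff.1 h).1
      · exact (hx _ (Finset.mem_of_mem_erase h)).2 rfl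
    have := hmax (insert (p.1, x) (insert (p.2, y) (S.erase p))) ⟨by
      intro q hq
      simp only [Finset.mem_insert, Finset.mem_erase] at hq
      rcases hq with rfl | rfl | hq
      · exact hpx
      · exact hpy
      · exact h1 q hq.2, by
      intro q hq r hr hqr
      simp only [Finset.mem_insert, Finset.mem_erase] at hq hr
      have hxp := hx p hp
      have hyp := hy p hp
      rcases hq with rfl | rfl | hq <;> rcases hr with rfl | rfl | hr
      · exact absurd rfl hqr
      · grind
      · have := h2 p hp r hr.2 hr.1.symm
        have := hx r hr.2
        grind
      · grind
      · exact absurd rfl hqr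
      · have := h2 p hp r hr.2 hr.1.symm
        have := hy r hr.2
        grind
      · have := h2 p hp q hq.2 hq.1.symm
        have := hx q hq.2
        grind
      · have := h2 p hp q hq.2 hq.1.symm
        have := hy q hq.2
        grind
      · exact h2 q hq.2 r hr.2 hqr⟩
    rw [Finset.card_insert_of_notMem n2, Finset.card_insert_of_notMem n1,
      Finset.card_erase_of_mem hp] at this
    have := Finset.card_pos.2 ⟨p, hp⟩
    omega
  let T : Finset (V × V) := S.filter (fun p => ∃ x ∈ U, G.Adj p.1 x ∧ G.Adj p.2 x)
  have hTS : T ⊆ S := Finset.filter_subset _ _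
  have hT : ∀ p : V × V, ∃ x, p ∈ T → x ∈ U ∧ G.Adj p.1 x ∧ G.Adj p.2 x := by
    intro p
    by_cases hp : p ∈ T
    · obtain ⟨x, hx⟩ := (Finset.mem_filter.1 hp).2
      exact ⟨x, fun _ => hx⟩
    · exact ⟨p.1, fun h => absurd h hp⟩
  choose apex hapex using hT
  let A : Finset V := (S \ T).image (fun p => if ∃ x ∈ U, G.Adj p.1 x then p.1 else p.2)
  have hA : A.card ≤ (S \ T).card := Finset.card_image_le
  have hTc := Finset.card_sdiff_add_card_eq_card hTS
  have hap : (T.image apex).card ≤ T.card := Finset.card_image_le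
  have hI := Finset.le_card_sdiff (T.image apex) U
  refine ⟨U \ T.image apex, Finset.card_pos.1 (by omega), ?_, ?_⟩
  · intro u hu v hv
    exact hUind u (Finset.mem_sdiff.1 hu).1 v (Finset.mem_sdiff.1 hv).1
  · have hsub : Finset.univ.filter (fun w => ∃ v ∈ U \ T.image apex, G.Adj v w) ⊆ A := by
      intro w hw
      obtain ⟨v, hv, hvw⟩ := (Finset.mem_filter.1 hw).2
      obtain ⟨hvU, hvT⟩ := Finset.mem_sdiff.1 hv
      have hwU : w ∉ U := fun h => hUind v hvU w h hvw
      rw [hU] at hwU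
      push Not at hwU
      obtain ⟨p, hp, hpw⟩ := hwU
      have hpT : p ∉ T := by
        intro hpT
        obtain ⟨a1, a2, a3⟩ := hapex p hpT
        apply hvT
        refine Finset.mem_image.2 ⟨p, hpT, ?_⟩
        by_cases e : p.1 = w
        · exact (haug p hp v hvU _ a1 (e ▸ hvw.symm) a3).symm
        · exact haug p hp _ a1 v hvU a2 (hpw e ▸ hvw.symm)
      refine Finset.mem_image.2 ⟨p, Finset.mem_sdiff.2 ⟨hp, hpT⟩, ?_⟩
      by_cases e : p.1 = w
      · rw [if_pos ⟨v, hvU, e ▸ hvw.symm⟩, e]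
      · have e2 := hpw e
        rw [if_neg, e2]
        rintro ⟨x, hx, hpx⟩
        have hpv : G.Adj p.2 v := e2 ▸ hvw.symm
        have := haug p hp x hx v hvU hpx hpv
        subst this
        exact hpT (Finset.mem_filter.2 ⟨hp, x, hx, hpx, hpv⟩)
    have := Finset.card_le_card hsub
    omega

/-- Every graph with at least `3 * k - 2` vertices and no isolated vertices has a matching
of size `k` or admits a crown decomposition. -/
theorem matching_or_crownDecomposition {V : Type*} [Fintype V] [DecidableEq V]
    (G : SimpleGraph V) (k : ℕ) (hk : 1 ≤ k) (hcard : 3 * k - 2 ≤ Fintype.card V)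
    (hiso : ∀ v : V, ∃ w, G.Adj v w) :
    (∃ M : G.Subgraph, M.IsMatching ∧ M.edgeSet.ncard = k) ∨
      ∃ C H R : Finset V, IsCrownDecomposition G C H R := by
  classical
  obtain ⟨S, hS, hmax⟩ := Finset.exists_max_image
    (Finset.univ.filter (fun S : Finset (V × V) => PairMatching G S)) Finset.card
    ⟨∅, by simp [PairMatching]⟩
  simp only [Finset.mem_filter, Finset.mem_univ, true_and] at hS hmax
  by_cases hkS : k ≤ S.card
  · left
    obtain ⟨T, hTS, rfl⟩ := Finset.exists_subset_card_eq hkS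
    exact PairMatching.toSubgraph (S := T) ⟨fun p hp => hS.1 p (hTS hp),
      fun p hp q hq => hS.2 p (hTS hp) q (hTS hq)⟩
  · right
    obtain ⟨I, hne, hind, hc⟩ := exists_indep G S hS hmax (by omega)
    obtain ⟨J, H, hJ, hH, hJI, hJH, hf⟩ := crown_of_indep G hiso I hne hind (by convert hc)
    have hd : Disjoint J H := by
      rw [Finset.disjoint_left]
      intro w hw hwH
      obtain ⟨v, hv, hvw⟩ := (hJH w).1 hwH
      exact hind v (hJI hv) w (hJI hw) hvw
    refine ⟨J, H, (J ∪ H)ᶜ, hJ, hH, Finset.union_compl _, hd, ?_, ?_, ?_, ?_, hf⟩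
    · exact disjoint_compl_right.mono_left Finset.subset_union_left
    · exact disjoint_compl_right.mono_left Finset.subset_union_right
    · intro u hu v hv
      exact hind u (hJI hu) v (hJI hv)
    · intro u hu v hv huv
      rw [Finset.mem_compl] at hv
      exact hv (Finset.mem_union_right _ ((hJH v).2 ⟨u, hu, huv⟩))
end

section
/- Let G be a finite simple graph on vertex set V, let u ∈ V be an isolated vertex of G, let G' be the subgraph of G induced by V \ {u}, and let F be a field. Then minrank_F(G) = minrank_F(G') + 1. -/
theorem rank_option_block {W F : Type*} [Fintype W] [Field F]
    (B : Matrix (Option W) (Option W) F) (h0 : B none none ≠ 0)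
    (h1 : ∀ w, B none (some w) = 0) (h2 : ∀ w, B (some w) none = 0) :
    B.rank = (B.submatrix some some).rank + 1 := by
  have key : ∀ x : Option W → F, B.mulVec x = 0 ↔
      x none = 0 ∧ (B.submatrix some some).mulVec (fun w => x (some w)) = 0 := by
    intro x
    constructor
    · intro h
      have hn := congrFun h none
      simp [Matrix.mulVec, dotProduct, Fintype.sum_option, h1, h0] at hn
      refine ⟨hn, ?_⟩
      funext w
      have hw := congrFun h (some w)
      simpa [Matrix.mulVec, dotProduct, Fintype.sum_option, h2] using hw
    · rintro ⟨hn, h⟩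
      funext w
      cases w with
      | none => simp [Matrix.mulVec, dotProduct, Fintype.sum_option, h1, hn]
      | some w =>
        have hw := congrFun h w
        simpa [Matrix.mulVec, dotProduct, Fintype.sum_option, h2] using hw
  let E : LinearMap.ker B.mulVecLin ≃ₗ[F] LinearMap.ker (B.submatrix some some).mulVecLin :=
    { toFun := fun x => ⟨fun w => x.1 (some w), by
        have := x.2
        rw [LinearMap.mem_ker, Matrix.mulVecLin_apply, key] at this
        rw [LinearMap.mem_ker, Matrix.mulVecLin_apply]
        exact this.2⟩
      invFun := fun y => ⟨fun o => o.elim 0 y.1, by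
        rw [LinearMap.mem_ker, Matrix.mulVecLin_apply, key]
        have := y.2
        rw [LinearMap.mem_ker, Matrix.mulVecLin_apply] at this
        exact ⟨rfl, this⟩⟩
      map_add' := fun x y => rfl
      map_smul' := fun c x => rfl
      left_inv := fun x => by
        have := x.2
        rw [LinearMap.mem_ker, Matrix.mulVecLin_apply, key] at this
        apply Subtype.ext
        funext o
        cases o with
        | none => exact this.1.symm
        | some w => rfl
      right_inv := fun y => rfl }
  have e1 := LinearMap.finrank_range_add_finrank_ker B.mulVecLin
  have e2 := LinearMap.finrank_range_add_finrank_ker (B.submatrix some some).mulVecLin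
  have e3 := E.finrank_eq
  rw [Module.finrank_fintype_fun_eq_card] at e1 e2
  rw [Fintype.card_option] at e1
  unfold Matrix.rank
  omega

theorem minrank_set_nonempty (F : Type*) [Field F] {V : Type*} [Fintype V]
    [DecidableEq V] (G : SimpleGraph V) :
    {r | ∃ A : Matrix V V F, (∀ i, A i i ≠ 0) ∧
    (∀ i j, i ≠ j → ¬ G.Adj i j → A i j = 0) ∧ A.rank = r}.Nonempty :=
  ⟨_, 1, by simp, fun i j h _ => Matrix.one_apply_ne h, rfl⟩

theorem minrank_option {V W : Type*} [Fintype V] [DecidableEq V] [Fintype W] [DecidableEq W]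
    (G : SimpleGraph V) (H : SimpleGraph W) (e : Option W ≃ V)
    (hadj : ∀ a b, H.Adj a b ↔ G.Adj (e (some a)) (e (some b)))
    (hu : ∀ v, ¬ G.Adj (e none) v) (F : Type*) [Field F] :
    minrank F G = minrank F H + 1 := by
  apply le_antisymm
  · obtain ⟨A, hd, hz, hr⟩ := Nat.sInf_mem (minrank_set_nonempty F H)
    let B : Matrix (Option W) (Option W) F := fun i j =>
      match i, j with
      | none, none => 1
      | some a, some b => A a b
      | _, _ => 0
    have hB := rank_option_block B one_ne_zero (fun _ => rfl) (fun _ => rfl)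
    have hBA : B.submatrix some some = A := rfl
    rw [hBA, hr] at hB
    apply Nat.sInf_le
    refine ⟨B.submatrix e.symm e.symm, ?_, ?_, ?_⟩
    · intro i
      obtain ⟨i, rfl⟩ := e.surjective i
      cases i with
      | none =>
        simp only [Matrix.submatrix_apply, Equiv.symm_apply_apply]
        exact one_ne_zero
      | some w =>
        simp only [Matrix.submatrix_apply, Equiv.symm_apply_apply]
        exact hd w
    · intro i j hij hn
      obtain ⟨i, rfl⟩ := e.surjective i
      obtain ⟨j, rfl⟩ := e.surjective j
      rcases i with _ | i <;> rcases j with _ | j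
      · exact absurd rfl hij
      · simp only [Matrix.submatrix_apply, Equiv.symm_apply_apply]
        rfl
      · simp only [Matrix.submatrix_apply, Equiv.symm_apply_apply]
        rfl
      · simp only [Matrix.submatrix_apply, Equiv.symm_apply_apply]
        exact hz i j (fun h => hij (by rw [h])) (fun h => hn ((hadj i j).1 h))
    · rw [Matrix.rank_submatrix, hB]
      rfl
  · obtain ⟨A, hd, hz, hr⟩ := Nat.sInf_mem (minrank_set_nonempty F G)
    have hB := rank_option_block (A.submatrix e e) (hd _)
      (fun w => hz _ _ (by simp) (hu _))
      (fun w => hz _ _ (by simp) (fun h => hu _ h.symm))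
    rw [Matrix.rank_submatrix, hr] at hB
    change _ ≤ sInf _
    rw [hB]
    apply Nat.succ_le_succ
    apply Nat.sInf_le
    exact ⟨_, fun i => hd _, fun i j hij hn => hz _ _ (by simpa using hij)
      (fun h => hn ((hadj i j).2 h)), rfl⟩

/-- Removing an isolated vertex decreases the minrank by exactly one. -/
theorem minrank_of_isolated {V : Type*} [Fintype V] [DecidableEq V] (G : SimpleGraph V)
    (u : V) (hu : ∀ v, ¬ G.Adj u v) (F : Type*) [Field F] :
    minrank F G =
      minrank F (G.induce ((Finset.univ.erase u : Finset V) : Set V)) + 1 := by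
  let f : Option ((Finset.univ.erase u : Finset V) : Set V) → V := fun o => o.elim u Subtype.val
  have hf : Function.Bijective f := by
    constructor
    · rintro (_ | ⟨a, ha⟩) (_ | ⟨b, hb⟩) h
      · rfl
      · simp [f] at h hb
        exact absurd h.symm hb
      · simp [f] at h ha
        exact absurd h ha
      · simp [f] at h
        simp [h]
    · intro v
      by_cases hv : v = u
      · exact ⟨none, hv.symm⟩
      · exact ⟨some ⟨v, by simp [hv]⟩, rfl⟩
  exact minrank_option G _ (Equiv.ofBijective f hf) (fun a b => Iff.rfl) hu F
end

section
/- Let G be a finite simple graph on n vertices that admits a matching of size r, and let F be a field. Then minrank_F(G) ≤ n − r. -/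
/-- If a graph on `n` vertices has a matching of size `r`, then its minrank over any field
is at most `n - r`. -/
theorem minrank_le_of_matching {V : Type*} [Fintype V] [DecidableEq V] (n : ℕ)
    (hcard : Fintype.card V = n) (G : SimpleGraph V) (r : ℕ)
    (hM : ∃ M : G.Subgraph, M.IsMatching ∧ M.edgeSet.ncard = r) (F : Type*) [Field F] :
    minrank F G ≤ n - r := by
  classical
  obtain ⟨M, hM, rfl⟩ := hM
  have huniq : ∀ {a b c : V}, M.Adj a b → M.Adj a c → b = c := fun {a b c} h1 h2 =>
    (hM (M.edge_vert h1)).unique h1 h2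
  have hex : ∀ e : M.edgeSet, ∃ v w : V, e.1 = s(v, w) ∧ M.Adj v w := by
    rintro ⟨e, he⟩
    induction e with
    | _ v w => exact ⟨v, w, rfl, by simpa using he⟩
  choose f g hfg hadj using hex
  have hinj : Function.Injective f := by
    intro e1 e2 h
    apply Subtype.ext
    have h1 := hadj e1
    have h2 := hadj e2
    rw [← h] at h2
    rw [hfg e1, hfg e2, ← h, huniq h1 h2]
  have hg : ∀ e, g e ∉ Set.range f := by
    rintro e ⟨e', he'⟩
    have h1 := hadj e'
    have h2 := (hadj e).symm
    rw [he'] at h1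
    have h3 : g e' = f e := huniq h1 h2
    have : e' = e := by
      apply Subtype.ext
      rw [hfg e', hfg e, he', h3, Sym2.eq_swap]
    subst this
    exact (hadj e').ne he'
  let A : Matrix V V F := fun i j => if i = j ∨ M.Adj i j then 1 else 0
  have hrow : ∀ {i i' : V}, M.Adj i i' → A i = A i' := by
    intro i i' h
    funext j
    have : (i = j ∨ M.Adj i j) ↔ (i' = j ∨ M.Adj i' j) := by
      constructor
      · rintro (rfl | h')
        · exact Or.inr h.symm
        · exact Or.inl (huniq h h')
      · rintro (rfl | h')
        · exact Or.inr h
        · exact Or.inl (huniq h.symm h')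
    simp only [A, this]
  have hrank : A.rank ≤ Fintype.card V - M.edgeSet.ncard := by
    rw [Matrix.rank_eq_finrank_span_row]
    have hsub : Set.range A.row = Set.range (fun i : ((Set.range f)ᶜ : Set V) => A i.1) := by
      apply Set.Subset.antisymm
      · rintro _ ⟨i, rfl⟩
        by_cases hi : i ∈ Set.range f
        · obtain ⟨e, rfl⟩ := hi
          exact ⟨⟨g e, hg e⟩, (hrow (hadj e)).symm⟩
        · exact ⟨⟨i, hi⟩, rfl⟩
      · rintro _ ⟨i, rfl⟩
        exact ⟨i.1, rfl⟩
    rw [hsub]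
    refine (finrank_range_le_card _).trans (le_of_eq ?_)
    rw [Fintype.card_compl_set, ← Nat.card_eq_fintype_card (α := Set.range f),
      Nat.card_range_of_injective hinj, Nat.card_coe_set_eq]
  rw [← hcard]
  refine le_trans (Nat.sInf_le (m := A.rank) ?_) hrank
  refine ⟨A, ?_, ?_, rfl⟩
  · intro i
    simp [A]
  · intro i j hij hn
    have : ¬ M.Adj i j := fun h => hn h.adj_sub
    simp [A, hij, this]
end

section
/- Let G be a finite simple graph on vertex set V with a crown decomposition V = C ∪ H ∪ R, and let F be a field. Then minrank_F(G) = minrank_F(G[R]) + |C|, where G[R] denotes the subgraph of G induced by R. -/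
theorem rank_blockDiag_aux {F m n : Type*} [Field F] [Fintype m] [Fintype n]
    (A : Matrix m m F) (B : Matrix n n F) :
    (Matrix.fromBlocks A 0 0 B).rank = A.rank + B.rank := by
  let L : (LinearMap.range A.mulVecLin × LinearMap.range B.mulVecLin) →ₗ[F] (m ⊕ n → F) :=
    (LinearEquiv.sumArrowLequivProdArrow m n F F).symm.toLinearMap ∘ₗ
      LinearMap.prodMap (Submodule.subtype _) (Submodule.subtype _)
  have hL : Function.Injective L := by
    refine (LinearEquiv.sumArrowLequivProdArrow m n F F).symm.injective.comp ?_
    exact Function.Injective.prodMap Subtype.val_injective Subtype.val_injective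
  have hr : LinearMap.range (Matrix.fromBlocks A 0 0 B).mulVecLin = LinearMap.range L := by
    ext v
    constructor
    · rintro ⟨w, rfl⟩
      refine ⟨(⟨A.mulVec (w ∘ Sum.inl), ⟨_, rfl⟩⟩, ⟨B.mulVec (w ∘ Sum.inr), ⟨_, rfl⟩⟩), ?_⟩
      ext i
      rcases i with i | i <;> simp [L, Matrix.fromBlocks_mulVec]
    · rintro ⟨⟨⟨_, a, rfl⟩, ⟨_, b, rfl⟩⟩, rfl⟩
      refine ⟨Sum.elim a b, ?_⟩
      ext i
      rcases i with i | i <;> simp [L, Matrix.fromBlocks_mulVec]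
  unfold Matrix.rank
  rw [hr, LinearMap.finrank_range_of_inj hL, Module.finrank_prod]

theorem minrank_le_aux {F V : Type*} [Field F] [Fintype V] [DecidableEq V]
    (G : SimpleGraph V) (A : Matrix V V F) (h1 : ∀ i, A i i ≠ 0)
    (h2 : ∀ i j, i ≠ j → ¬ G.Adj i j → A i j = 0) : minrank F G ≤ A.rank :=
  Nat.sInf_le ⟨A, h1, h2, rfl⟩

theorem minrank_exists_aux (F : Type*) {V : Type*} [Field F] [Fintype V] [DecidableEq V]
    (G : SimpleGraph V) : ∃ A : Matrix V V F, (∀ i, A i i ≠ 0) ∧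
    (∀ i j, i ≠ j → ¬ G.Adj i j → A i j = 0) ∧ A.rank = minrank F G := by
  have : {r | ∃ A : Matrix V V F, (∀ i, A i i ≠ 0) ∧
    (∀ i j, i ≠ j → ¬ G.Adj i j → A i j = 0) ∧ A.rank = r}.Nonempty :=
    ⟨_, 1, by simp, fun i j h _ => Matrix.one_apply_ne h, rfl⟩
  exact Nat.sInf_mem this

/-- For a crown decomposition `V = C ∪ H ∪ R` of `G`, the minrank of `G` over a field `F`
equals the minrank of `G[R]` over `F` plus `|C|`. -/
theorem minrank_crown {V : Type*} [Fintype V] [DecidableEq V] (G : SimpleGraph V)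
    (C H R : Finset V) (hcrown : IsCrownDecomposition G C H R) (F : Type*) [Field F] :
    minrank F G = minrank F (G.induce (R : Set V)) + C.card := by
  obtain ⟨-, -, hU, hCH, hCR, hHR, hCC, hCR', f, hf, hfa⟩ := hcrown
  apply le_antisymm
  · obtain ⟨B, hB1, hB2, hB3⟩ := minrank_exists_aux F (G.induce (R : Set V))
    have hmem : ∀ v, v ∉ C → v ∉ H → v ∈ (R : Set V) := by
      intro v h1 h2
      have := Finset.mem_univ v
      rw [← hU] at this
      simp only [Finset.mem_union] at this
      simp only [Finset.mem_coe]
      tauto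
    let g : V → C ⊕ (R : Set V) := fun v =>
      if h1 : v ∈ C then Sum.inl ⟨v, h1⟩ else
      if h2 : v ∈ H then Sum.inl (f ⟨v, h2⟩) else Sum.inr ⟨v, hmem v h1 h2⟩
    let M : Matrix (C ⊕ (R : Set V)) (C ⊕ (R : Set V)) F := Matrix.fromBlocks 1 0 0 B
    have hM : M.rank = minrank F (G.induce (R : Set V)) + C.card := by
      rw [rank_blockDiag_aux, Matrix.rank_one, hB3, Fintype.card_coe, add_comm]
    rw [← hM]
    refine le_trans (minrank_le_aux G (M.submatrix g g) ?_ ?_) (Matrix.rank_submatrix_le _ _ _)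
    · intro i
      rcases h : g i with c | r
      · simp [M, h]
      · simpa [M, h] using hB1 r
    · intro i j hij hadj
      by_cases hi1 : i ∈ C <;> by_cases hi2 : i ∈ H <;> by_cases hj1 : j ∈ C <;>
        by_cases hj2 : j ∈ H <;>
        simp only [g, M, hi1, hi2, hj1, hj2, dif_pos, dif_neg, not_false_eq_true,
          Matrix.submatrix_apply, Matrix.fromBlocks_apply₁₁, Matrix.fromBlocks_apply₁₂,
          Matrix.fromBlocks_apply₂₁, Matrix.fromBlocks_apply₂₂, Matrix.zero_apply]
      all_goals first
        | exact hB2 _ _ (fun h => hij (congrArg Subtype.val h)) hadj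
        | skip
      all_goals apply Matrix.one_apply_ne
      all_goals intro h
      all_goals first
        | exact hij (congrArg Subtype.val h)
        | exact hij (congrArg Subtype.val (hf h))
        | skip
      all_goals first
        | exact (Finset.disjoint_left.mp hCH ‹_› ‹_›).elim
        | skip
      · apply hadj
        have := hfa ⟨j, hj2⟩
        rw [← h] at this
        exact this.symm
      · apply hadj
        have := hfa ⟨i, hi2⟩
        rw [h] at this
        exact this
  · obtain ⟨A, hA1, hA2, hA3⟩ := minrank_exists_aux F G
    rw [← hA3]
    let e : C ⊕ (R : Set V) → V := Sum.elim Subtype.val Subtype.val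
    refine le_trans ?_ (Matrix.rank_submatrix_le A e e)
    have hne : ∀ u ∈ C, ∀ v ∈ R, u ≠ v := fun u hu v hv h =>
      Finset.disjoint_left.mp hCR hu (h ▸ hv)
    have hE : A.submatrix e e = Matrix.fromBlocks (Matrix.diagonal fun c : C => A c c) 0 0
        (A.submatrix (fun r : (R : Set V) => (r : V)) (fun r : (R : Set V) => (r : V))) := by
      ext i j
      rcases i with i | i <;> rcases j with j | j
      · by_cases h : i = j
        · subst h; simp [e]
        · simp only [e, Matrix.submatrix_apply, Matrix.fromBlocks_apply₁₁, Sum.elim_inl]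
          rw [Matrix.diagonal_apply_ne _ h]
          exact hA2 _ _ (fun h' => h (Subtype.ext h')) (hCC _ i.2 _ j.2)
      · exact hA2 _ _ (hne _ i.2 _ j.2) (hCR' _ i.2 _ j.2)
      · exact hA2 _ _ (hne _ j.2 _ i.2).symm (fun h => hCR' _ j.2 _ i.2 h.symm)
      · rfl
    rw [hE, rank_blockDiag_aux, Matrix.rank_of_det_ne_zero, Fintype.card_coe, add_comm]
    · apply Nat.add_le_add_left
      refine minrank_le_aux _ _ (fun i => hA1 _) ?_
      intro i j hij hadj
      exact hA2 _ _ (fun h => hij (Subtype.ext h)) hadj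
    · rw [Matrix.det_diagonal]
      exact Finset.prod_ne_zero_iff.mpr fun c _ => hA1 _
end
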